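/- Let W = (G, m) be a finite connected weighted graph with standard weights and Betti number 1. If G has a vertex of degree 1, then there exists a centre vertex v₀ with a single cycle edge e₁ such that 1 − 1/deg((v₀)_{e₁}) − 1/deg(v₀) ≥ 1/6 > 0; consequently the magnetic spectral gaps set MS^G is nonempty. -/

import Mathlib

open Matrix BigOperators

/-- Sum of edge weights over edges incident to `v` (loops counted twice). -/
noncomputable def edgeSumAt {V E : Type*} [Fintype E] [DecidableEq V] (src tgt : E → V)
    (mE : E → ℝ) (v : V) : ℝ :=
  ∑ e : E, ((if src e = v then mE e else 0) + (if tgt e = v then mE e else 0))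

/-- Relative weight `ρ(v) = m(E_v)/m(v)`. -/
noncomputable def rho {V E : Type*} [Fintype E] [DecidableEq V] (src tgt : E → V)
    (m : V → ℝ) (mE : E → ℝ) (v : V) : ℝ :=
  edgeSumAt src tgt mE v / m v

/-- Matrix of the discrete magnetic Laplacian (in the orthonormal basis
`m(v)^{-1/2} 1_v` of `ℓ²(V,m)`), with unimodular phases `z e` on the edges. -/
noncomputable def dmlPhase {V E : Type*} [Fintype E] [DecidableEq V] (src tgt : E → V)
    (m : V → ℝ) (mE : E → ℝ) (z : E → ℂ) : Matrix V V ℂ :=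
  fun u v =>
    (if u = v then ((rho src tgt m mE u : ℝ) : ℂ) else 0) -
      ((1 / (Real.sqrt (m u) * Real.sqrt (m v)) : ℝ) : ℂ) *
        ∑ e : E, (mE e : ℂ) *
          ((if src e = v ∧ tgt e = u then z e else 0) +
           (if tgt e = v ∧ src e = u then starRingEnd ℂ (z e) else 0))

/-- Discrete magnetic Laplacian with vector potential `α : E → ℝ`. -/
noncomputable def dml {V E : Type*} [Fintype E] [DecidableEq V] (src tgt : E → V)
    (m : V → ℝ) (mE : E → ℝ) (α : E → ℝ) : Matrix V V ℂ :=
  dmlPhase src tgt m mE (fun e => Complex.exp ((α e : ℂ) * Complex.I))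

/-- Real spectrum of a complex matrix. -/
noncomputable def realSpec {V : Type*} [Fintype V] [DecidableEq V] (M : Matrix V V ℂ) : Set ℝ :=
  {x : ℝ | (x : ℂ) ∈ spectrum ℂ M}

/-- Degree of a vertex in the multigraph (loops counted twice). -/
def mdeg {V E : Type*} [Fintype E] [DecidableEq V] (src tgt : E → V) (v : V) : ℕ :=
  ∑ e : E, ((if src e = v then 1 else 0) + (if tgt e = v then 1 else 0))

/-- Simple graph underlying the multigraph restricted to the edge set `S`. -/
def multiGraph {V E : Type*} (src tgt : E → V) (S : Set E) : SimpleGraph V :=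
  SimpleGraph.fromRel (fun u v => ∃ e ∈ S, src e = u ∧ tgt e = v)

/-- `G − A` is a tree: connected with `|E \ A| = |V| − 1`. -/
def isTreeAfter {V E : Type*} [Fintype V] [Fintype E] [DecidableEq E] (src tgt : E → V)
    (A : Finset E) : Prop :=
  (multiGraph src tgt {e | e ∉ A}).Connected ∧
    (Finset.univ.filter (fun e => e ∉ A)).card = Fintype.card V - 1

/-- Magnetic spectral gaps set `[0, 2ρ_∞] \ ⋃_α σ(Δ_α)`. -/
noncomputable def msSet {V E : Type*} [Fintype V] [Fintype E] [DecidableEq V] [Nonempty V]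
    (src tgt : E → V) (m : V → ℝ) (mE : E → ℝ) : Set ℝ :=
  Set.Icc 0 (2 * Finset.univ.sup' Finset.univ_nonempty (rho src tgt m mE)) \
    ⋃ (α : E → ℝ), realSpec (dml src tgt m mE α)

/-!
Since `|E| = |V|`, there is a nonzero circulation. An edge in its support is not a bridge, so
removing it leaves a spanning tree; and since no circulation passes through a vertex of degree `1`,
the connectedness of the graph forces some vertex `v₀` of the support to have a further edge, that
is, degree at least `3`.

Let `e₁` be a support edge at `v₀`. Up to unitary equivalence a potential may be gauged away on the
tree, so every `Δ_α` is the sum of a fixed Hermitian matrix `P` and the off-diagonal contribution of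
`e₁`, which lies between `-D` and `D` in the Loewner order for a diagonal matrix `D` of trace
`1/deg (src e₁) + 1/deg (tgt e₁)`. By Weyl's monotonicity principle the `k`-th eigenvalue of `Δ_α`
lies between those of `P - D` and `P + D`, so the spectra of all the `Δ_α` together have measure at
most `2 tr D ≤ 5/3`, too little to cover `[0, 2]`.
-/

section Weyl

variable {𝕜 E : Type*} [RCLike 𝕜] [NormedAddCommGroup E] [InnerProductSpace 𝕜 E]

lemma re_inner_apply_self_eq_sum_eigenvalues [FiniteDimensional 𝕜 E] {n : ℕ}
    (hn : Module.finrank 𝕜 E = n) {T : E →ₗ[𝕜] E} (hT : T.IsSymmetric) (x : E) :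
    RCLike.re (inner 𝕜 (T x) x) =
      ∑ i, hT.eigenvalues hn i * ‖(hT.eigenvectorBasis hn).repr x i‖ ^ 2 := by
  rw [← (hT.eigenvectorBasis hn).repr.inner_map_map, PiLp.inner_apply, map_sum]
  refine Finset.sum_congr rfl fun i _ => ?_
  rw [hT.eigenvectorBasis_apply_self_apply, RCLike.inner_apply, map_mul (starRingEnd 𝕜),
    RCLike.conj_ofReal, mul_left_comm, RCLike.mul_conj, RCLike.re_ofReal_mul, ← RCLike.ofReal_pow,
    RCLike.ofReal_re]

lemma sq_norm_eq_sum_sq_norm_repr {ι : Type*} [Fintype ι] (b : OrthonormalBasis ι 𝕜 E) (x : E) :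
    ‖x‖ ^ 2 = ∑ i, ‖b.repr x i‖ ^ 2 := by
  rw [← b.repr.norm_map, EuclideanSpace.norm_sq_eq]

lemma eigenvalues_mul_sq_norm_le_re_inner [FiniteDimensional 𝕜 E] {n : ℕ}
    (hn : Module.finrank 𝕜 E = n) {T : E →ₗ[𝕜] E} (hT : T.IsSymmetric) {k : Fin n} {x : E}
    (hx : ∀ i, k < i → (hT.eigenvectorBasis hn).repr x i = 0) :
    hT.eigenvalues hn k * ‖x‖ ^ 2 ≤ RCLike.re (inner 𝕜 (T x) x) := by
  rw [re_inner_apply_self_eq_sum_eigenvalues hn hT,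
    sq_norm_eq_sum_sq_norm_repr (hT.eigenvectorBasis hn), Finset.mul_sum]
  refine Finset.sum_le_sum fun i _ => ?_
  rcases lt_or_ge k i with hki | hik
  · simp [hx i hki]
  · exact mul_le_mul_of_nonneg_right (hT.eigenvalues_antitone hn hik) (sq_nonneg _)

lemma re_inner_le_eigenvalues_mul_sq_norm [FiniteDimensional 𝕜 E] {n : ℕ}
    (hn : Module.finrank 𝕜 E = n) {T : E →ₗ[𝕜] E} (hT : T.IsSymmetric) {k : Fin n} {x : E}
    (hx : ∀ i, i < k → (hT.eigenvectorBasis hn).repr x i = 0) :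
    RCLike.re (inner 𝕜 (T x) x) ≤ hT.eigenvalues hn k * ‖x‖ ^ 2 := by
  rw [re_inner_apply_self_eq_sum_eigenvalues hn hT,
    sq_norm_eq_sum_sq_norm_repr (hT.eigenvectorBasis hn), Finset.mul_sum]
  refine Finset.sum_le_sum fun i _ => ?_
  rcases lt_or_ge i k with hik | hki
  · simp [hx i hik]
  · exact mul_le_mul_of_nonneg_right (hT.eigenvalues_antitone hn hki) (sq_nonneg _)

lemma exists_ne_zero_repr_eq_zero {K W ι : Type*} [Field K] [AddCommGroup W] [Module K W]
    [Finite ι] [LinearOrder ι] (b b' : Module.Basis ι K W) (k : ι) :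
    ∃ x ≠ 0, (∀ i, k < i → b.repr x i = 0) ∧ ∀ i, i < k → b'.repr x i = 0 := by
  cases nonempty_fintype ι
  let T : W →ₗ[K] ({i // i ≠ k} → K) :=
    LinearMap.pi fun i => if k < i.1 then b.coord i else b'.coord i
  have : FiniteDimensional K W := b.finiteDimensional_of_finite
  have hker : LinearMap.ker T ≠ ⊥ := by
    refine LinearMap.ker_ne_bot_of_finrank_lt ?_
    rw [Module.finrank_fintype_fun_eq_card, Module.finrank_eq_card_basis b]
    exact Fintype.card_subtype_lt (x := k) (not_not.2 rfl)
  obtain ⟨x, hxT, hx⟩ := Submodule.exists_mem_ne_zero_of_ne_bot hker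
  refine ⟨x, hx, fun i hi => ?_, fun i hi => ?_⟩
  · simpa [T, hi] using congrFun (LinearMap.mem_ker.1 hxT) ⟨i, hi.ne'⟩
  · simpa [T, hi.not_gt] using congrFun (LinearMap.mem_ker.1 hxT) ⟨i, hi.ne⟩

lemma isSymmetric_eigenvalues_le_of_le [FiniteDimensional 𝕜 E] {n : ℕ}
    (hn : Module.finrank 𝕜 E = n) {S T : E →ₗ[𝕜] E} (hS : S.IsSymmetric) (hT : T.IsSymmetric)
    (hST : S ≤ T) (k : Fin n) : hS.eigenvalues hn k ≤ hT.eigenvalues hn k := by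
  obtain ⟨x, hx, hxS, hxT⟩ := exists_ne_zero_repr_eq_zero
    (hS.eigenvectorBasis hn).toBasis (hT.eigenvectorBasis hn).toBasis k
  have hle : RCLike.re (inner 𝕜 (S x) x) ≤ RCLike.re (inner 𝕜 (T x) x) := by
    simpa [inner_sub_left] using hST.re_inner_nonneg_left x
  refine le_of_mul_le_mul_right ?_ (pow_pos (norm_pos_iff.2 hx) 2)
  calc hS.eigenvalues hn k * ‖x‖ ^ 2
      ≤ RCLike.re (inner 𝕜 (S x) x) := eigenvalues_mul_sq_norm_le_re_inner hn hS hxS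
    _ ≤ RCLike.re (inner 𝕜 (T x) x) := hle
    _ ≤ hT.eigenvalues hn k * ‖x‖ ^ 2 := re_inner_le_eigenvalues_mul_sq_norm hn hT hxT

end Weyl

section Sandwich

open scoped ComplexOrder MatrixOrder

variable {n : Type*}

lemma isHermitian_of_le {𝕜 : Type*} [RCLike 𝕜] {A B : Matrix n n 𝕜} (hA : A.IsHermitian)
    (hAB : A ≤ B) : B.IsHermitian := by
  simpa using (Matrix.le_iff.1 hAB).isHermitian.add hA

variable [Fintype n] [DecidableEq n]

lemma isHermitian_eigenvalues_le_of_le {𝕜 : Type*} [RCLike 𝕜] {A B : Matrix n n 𝕜}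
    (hA : A.IsHermitian) (hB : B.IsHermitian) (hAB : A ≤ B) (k : n) :
    hA.eigenvalues k ≤ hB.eigenvalues k := by
  refine isSymmetric_eigenvalues_le_of_le _ _ _ ?_ _
  rw [LinearMap.le_def, ← map_sub, Matrix.isPositive_toEuclideanLin_iff]
  exact hAB

lemma exists_eigenvalues_mem_Icc {A B M : Matrix n n ℂ} (hA : A.IsHermitian)
    (hB : B.IsHermitian) (hM : M ∈ Set.Icc A B) {x : ℝ} (hx : x ∈ realSpec M) :
    ∃ k, x ∈ Set.Icc (hA.eigenvalues k) (hB.eigenvalues k) := by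
  have hMh : M.IsHermitian := isHermitian_of_le hA hM.1
  rw [realSpec, Set.mem_ofPred_eq, hMh.spectrum_eq_image_range] at hx
  obtain ⟨_, ⟨k, rfl⟩, hk⟩ := hx
  obtain rfl : hMh.eigenvalues k = x := Complex.ofReal_injective hk
  exact ⟨k, isHermitian_eigenvalues_le_of_le hA hMh hM.1 k,
    isHermitian_eigenvalues_le_of_le hMh hB hM.2 k⟩

lemma volume_iUnion_realSpec_Icc_le {A B : Matrix n n ℂ} (hA : A.IsHermitian) :
    MeasureTheory.volume (⋃ M ∈ Set.Icc A B, realSpec M) ≤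
      ENNReal.ofReal (B - A).trace.re := by
  by_cases hAB : A ≤ B
  · have hB := isHermitian_of_le hA hAB
    have hcover : ⋃ M ∈ Set.Icc A B, realSpec M ⊆
        ⋃ k, Set.Icc (hA.eigenvalues k) (hB.eigenvalues k) :=
      Set.iUnion₂_subset fun M hM x hx =>
        Set.mem_iUnion.2 (exists_eigenvalues_mem_Icc hA hB hM hx)
    calc MeasureTheory.volume (⋃ M ∈ Set.Icc A B, realSpec M)
        ≤ ∑ k, MeasureTheory.volume (Set.Icc (hA.eigenvalues k) (hB.eigenvalues k)) :=
          (MeasureTheory.measure_mono hcover).trans (MeasureTheory.measure_iUnion_fintype_le _ _)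
      _ = ENNReal.ofReal (∑ k, (hB.eigenvalues k - hA.eigenvalues k)) := by
          simp only [Real.volume_Icc]
          exact (ENNReal.ofReal_sum_of_nonneg fun k _ =>
            sub_nonneg.2 (isHermitian_eigenvalues_le_of_le hA hB hAB k)).symm
      _ = ENNReal.ofReal (B - A).trace.re := by
          simp [Matrix.trace_sub, hA.trace_eq_sum_eigenvalues, hB.trace_eq_sum_eigenvalues]
  · simp [Set.Icc_eq_empty hAB]

end Sandwich

section Laplacian

open scoped ComplexOrder MatrixOrder

variable {V E : Type*} [DecidableEq V] (src tgt : E → V) (m : V → ℝ) (mE : E → ℝ)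

/-- The vector of `ℓ²(V, m)` representing the evaluation `f ↦ f v`, in the orthonormal basis
`m(v)^{-1/2} 1_v` in which `dml` is written. -/
noncomputable def evalVec (v : V) : V → ℂ :=
  Pi.single v ((1 / √(m v) : ℝ) : ℂ)

/-- The off-diagonal part that the edge `e` contributes, up to sign, to the magnetic Laplacian when
it carries the complex number `z`. -/
noncomputable def edgeHopping (e : E) (z : ℂ) : Matrix V V ℂ :=
  (mE e : ℂ) • (z • vecMulVec (evalVec m (tgt e)) (star (evalVec m (src e))) +
    star z • vecMulVec (evalVec m (src e)) (star (evalVec m (tgt e))))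

/-- The diagonal matrix that the edge `e` contributes to the Laplacian; it bounds every
`edgeHopping` of `e` with a unimodular phase in the Loewner order. -/
noncomputable def edgePotential (e : E) : Matrix V V ℂ :=
  (mE e : ℂ) • (vecMulVec (evalVec m (src e)) (star (evalVec m (src e))) +
    vecMulVec (evalVec m (tgt e)) (star (evalVec m (tgt e))))

lemma vecMulVec_evalVec_apply (a b u v : V) :
    vecMulVec (evalVec m a) (star (evalVec m b)) u v =
      if b = v ∧ a = u then ((1 / (√(m u) * √(m v)) : ℝ) : ℂ) else 0 := by
  by_cases hb : b = v <;> by_cases ha : a = u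
  · subst hb ha
    simp [evalVec, vecMulVec_apply, mul_comm]
  all_goals simp [evalVec, vecMulVec_apply, ha, hb, eq_comm]

lemma trace_vecMulVec_evalVec [Fintype V] {v : V} (hv : 0 ≤ m v) :
    (vecMulVec (evalVec m v) (star (evalVec m v))).trace = ((1 / m v : ℝ) : ℂ) := by
  rw [trace_vecMulVec, evalVec, single_dotProduct, Pi.star_apply, Pi.single_eq_same,
    Complex.star_def, Complex.conj_ofReal, ← Complex.ofReal_mul, div_mul_div_comm, one_mul,
    Real.mul_self_sqrt hv]

lemma diagonal_mulVec_evalVec [Fintype V] (f : V → ℂ) (v : V) :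
    diagonal f *ᵥ evalVec m v = f v • evalVec m v := by
  ext u
  rw [mulVec_diagonal, Pi.smul_apply, smul_eq_mul]
  by_cases h : u = v
  · rw [h]
  · simp [evalVec, h]

lemma edgeHopping_isHermitian (e : E) (z : ℂ) : (edgeHopping src tgt m mE e z).IsHermitian := by
  simp only [IsHermitian, edgeHopping, conjTranspose_smul, conjTranspose_add,
    conjTranspose_vecMulVec, star_star, RCLike.star_def, Complex.conj_ofReal, Complex.conj_conj]
  rw [add_comm]

@[simp]
lemma edgeHopping_zero (e : E) : edgeHopping src tgt m mE e 0 = 0 := by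
  simp [edgeHopping]

lemma edgeHopping_neg (e : E) (z : ℂ) :
    edgeHopping src tgt m mE e (-z) = -edgeHopping src tgt m mE e z := by
  simp only [edgeHopping, star_neg, neg_smul, ← neg_add, smul_neg]

lemma edgePotential_isHermitian (e : E) : (edgePotential src tgt m mE e).IsHermitian := by
  simp only [IsHermitian, edgePotential, conjTranspose_smul, conjTranspose_add,
    conjTranspose_vecMulVec, star_star, Complex.star_def, Complex.conj_ofReal]

lemma trace_edgePotential [Fintype V] (hm : ∀ v, 0 ≤ m v) (e : E) :
    (edgePotential src tgt m mE e).trace =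
      ((mE e * (1 / m (src e) + 1 / m (tgt e)) : ℝ) : ℂ) := by
  rw [edgePotential, trace_smul, trace_add, trace_vecMulVec_evalVec m (hm _),
    trace_vecMulVec_evalVec m (hm _), smul_eq_mul, ← Complex.ofReal_add, ← Complex.ofReal_mul]

lemma edgeHopping_le_edgePotential [Finite V] {e : E} (he : 0 ≤ mE e) {z : ℂ}
    (hz : ‖z‖ = 1) : edgeHopping src tgt m mE e z ≤ edgePotential src tgt m mE e := by
  have hzz : star z * z = 1 := by
    rw [Complex.star_def, Complex.conj_mul', hz, Complex.ofReal_one, one_pow]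
  have hdiff : edgePotential src tgt m mE e - edgeHopping src tgt m mE e z =
      (mE e : ℂ) • vecMulVec (evalVec m (src e) - z • evalVec m (tgt e))
        (star (evalVec m (src e) - z • evalVec m (tgt e))) := by
    simp only [edgePotential, edgeHopping, star_sub, star_smul, sub_vecMulVec, vecMulVec_sub,
      smul_vecMulVec, vecMulVec_smul, smul_sub, smul_add, smul_smul, hzz, mul_one]
    abel
  rw [Matrix.le_iff, hdiff]
  exact (posSemidef_vecMulVec_self_star _).smul (Complex.zero_le_real.2 he)

lemma diagonal_mul_edgeHopping_mul_diagonal [Fintype V] (f : V → ℂ) (e : E) (z : ℂ) :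
    diagonal f * edgeHopping src tgt m mE e z * diagonal (star f) =
      edgeHopping src tgt m mE e (f (tgt e) * z * star (f (src e))) := by
  have hconj (a b : V) :
      diagonal f * vecMulVec (evalVec m a) (star (evalVec m b)) * diagonal (star f) =
        (f a * star (f b)) • vecMulVec (evalVec m a) (star (evalVec m b)) := by
    have hstar : star (evalVec m b) ᵥ* diagonal (star f) = star (diagonal f *ᵥ evalVec m b) := by
      rw [star_mulVec, diagonal_conjTranspose]
    rw [mul_vecMulVec, vecMulVec_mul, hstar, diagonal_mulVec_evalVec, diagonal_mulVec_evalVec,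
      star_smul, smul_vecMulVec, vecMulVec_smul, smul_smul]
  simp only [edgeHopping, Matrix.mul_smul, Matrix.smul_mul, Matrix.mul_add, Matrix.add_mul, hconj,
    smul_smul, star_mul, star_star]
  congr 3 <;> ring

variable [Fintype E]

lemma dmlPhase_eq_diagonal_sub_sum (z : E → ℂ) :
    dmlPhase src tgt m mE z =
      diagonal (fun v => (rho src tgt m mE v : ℂ)) - ∑ e, edgeHopping src tgt m mE e (z e) := by
  ext u v
  simp only [dmlPhase, Matrix.sub_apply, diagonal_apply, Matrix.sum_apply, edgeHopping,
    Matrix.smul_apply, Matrix.add_apply, vecMulVec_evalVec_apply, Finset.mul_sum, smul_eq_mul,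
    Complex.star_def]
  congr 1
  refine Finset.sum_congr rfl fun e _ => ?_
  split_ifs <;> ring

lemma dmlPhase_isHermitian (z : E → ℂ) : (dmlPhase src tgt m mE z).IsHermitian := by
  rw [dmlPhase_eq_diagonal_sub_sum]
  refine (isHermitian_diagonal_of_self_adjoint _ (by ext v; simp)).sub ?_
  exact isSelfAdjoint_sum _ fun e _ => edgeHopping_isHermitian src tgt m mE e (z e)

lemma dmlPhase_eq_sub_sum [DecidableEq E] (A : Finset E) (z : E → ℂ) :
    dmlPhase src tgt m mE z =
      dmlPhase src tgt m mE (A.piecewise (fun _ => 0) z) -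
        ∑ e ∈ A, edgeHopping src tgt m mE e (z e) := by
  have hoff : ∑ e, edgeHopping src tgt m mE e (A.piecewise (fun _ => 0) z e) =
      ∑ e ∈ Aᶜ, edgeHopping src tgt m mE e (z e) := by
    rw [← Finset.sum_add_sum_compl A, Finset.sum_eq_zero, zero_add]
    · exact Finset.sum_congr rfl fun e he => by simp [Finset.mem_compl.1 he]
    · intro e he; simp [he]
  rw [dmlPhase_eq_diagonal_sub_sum, dmlPhase_eq_diagonal_sub_sum, hoff,
    ← Finset.sum_add_sum_compl A, sub_sub, add_comm]

lemma dmlPhase_mem_Icc [Finite V] [DecidableEq E] {A : Finset E} (hmE : ∀ e ∈ A, 0 ≤ mE e)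
    {z : E → ℂ} (hz : ∀ e ∈ A, ‖z e‖ = 1) :
    dmlPhase src tgt m mE z ∈ Set.Icc
      (dmlPhase src tgt m mE (A.piecewise (fun _ => 0) z) -
        ∑ e ∈ A, edgePotential src tgt m mE e)
      (dmlPhase src tgt m mE (A.piecewise (fun _ => 0) z) +
        ∑ e ∈ A, edgePotential src tgt m mE e) := by
  rw [dmlPhase_eq_sub_sum src tgt m mE A z, sub_eq_add_neg _ (∑ e ∈ A, edgeHopping _ _ _ _ _ _)]
  constructor
  · rw [sub_eq_add_neg]
    gcongr with e he
    exact edgeHopping_le_edgePotential src tgt m mE (hmE e he) (hz e he)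
  · rw [← Finset.sum_neg_distrib]
    gcongr with e he
    rw [← edgeHopping_neg]
    exact edgeHopping_le_edgePotential src tgt m mE (hmE e he) (by simpa using hz e he)

lemma realSpec_dmlPhase_gauge [Fintype V] {f : V → ℂ} (hf : ∀ v, ‖f v‖ = 1) (z : E → ℂ) :
    realSpec (dmlPhase src tgt m mE fun e => f (tgt e) * z e * star (f (src e))) =
      realSpec (dmlPhase src tgt m mE z) := by
  have hstar : star (diagonal f) = diagonal (star f) := diagonal_conjTranspose f
  have hmul : diagonal f * diagonal (star f) = 1 := by
    rw [diagonal_mul_diagonal, ← diagonal_one]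
    refine congrArg diagonal (funext fun v => ?_)
    rw [Pi.star_apply, Complex.star_def, Complex.mul_conj', hf, Complex.ofReal_one, one_pow]
  have hU : diagonal f ∈ unitary (Matrix V V ℂ) := by
    rw [Unitary.mem_iff, hstar]
    exact ⟨mul_eq_one_comm.1 hmul, hmul⟩
  have hconj : dmlPhase src tgt m mE (fun e => f (tgt e) * z e * star (f (src e))) =
      diagonal f * dmlPhase src tgt m mE z * star (diagonal f) := by
    simp only [hstar, dmlPhase_eq_diagonal_sub_sum, Matrix.mul_sub, Matrix.sub_mul,
      Finset.mul_sum, Finset.sum_mul, diagonal_mul_edgeHopping_mul_diagonal]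
    congr 1
    rw [(commute_diagonal f _).eq, Matrix.mul_assoc, hmul, Matrix.mul_one]
  simp only [realSpec, hconj, Unitary.spectrum_star_right_conjugate (U := ⟨diagonal f, hU⟩)]

end Laplacian

section Circulation

variable {V E : Type*} (src tgt : E → V)

lemma multiGraph_reachable_of_mem {S : Set E} {e : E} (he : e ∈ S) :
    (multiGraph src tgt S).Reachable (src e) (tgt e) := by
  by_cases h : src e = tgt e
  · rw [h]
  · exact SimpleGraph.Adj.reachable ⟨h, Or.inl ⟨e, he, rfl, rfl⟩⟩

lemma eq_of_multiGraph_reachable {X : Type*} {S : Set E} {f : V → X}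
    (hf : ∀ e ∈ S, f (src e) = f (tgt e)) {u v : V}
    (huv : (multiGraph src tgt S).Reachable u v) : f u = f v := by
  obtain ⟨p⟩ := huv
  induction p with
  | nil => rfl
  | cons h _ ih =>
    refine Eq.trans ?_ ih
    obtain ⟨_, ⟨e, he, rfl, rfl⟩ | ⟨e, he, rfl, rfl⟩⟩ := h
    exacts [hf e he, (hf e he).symm]

/-- The boundary map of the multigraph: `1`-chains to `0`-chains. Its kernel is the space of
circulations. -/
def boundary (R : Type*) [CommRing R] [Fintype E] [DecidableEq V] : (E → R) →ₗ[R] (V → R) :=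
  Fintype.linearCombination R fun e => Pi.single (tgt e) 1 - Pi.single (src e) 1

/-- The coboundary map of the multigraph: the discrete gradient of a potential on the vertices. -/
def coboundary (R : Type*) [CommRing R] : (V → R) →ₗ[R] (E → R) :=
  LinearMap.funLeft R R tgt - LinearMap.funLeft R R src

lemma coboundary_apply (R : Type*) [CommRing R] (φ : V → R) (e : E) :
    coboundary src tgt R φ e = φ (tgt e) - φ (src e) := rfl

lemma boundary_apply (R : Type*) [CommRing R] [Fintype E] [DecidableEq V] (c : E → R) (v : V) :
    boundary src tgt R c v =
      ∑ e, c e * ((if tgt e = v then 1 else 0) - (if src e = v then 1 else 0)) := by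
  simp [boundary, Fintype.linearCombination_apply, Pi.single_apply, eq_comm]

lemma dotProduct_boundary (R : Type*) [CommRing R] [Fintype V] [Fintype E] [DecidableEq V]
    (φ : V → R) (c : E → R) :
    φ ⬝ᵥ boundary src tgt R c = coboundary src tgt R φ ⬝ᵥ c := by
  rw [boundary, Fintype.linearCombination_apply, dotProduct_sum]
  simp only [dotProduct_smul, dotProduct_sub, dotProduct_single_one, smul_eq_mul]
  simp only [dotProduct, coboundary_apply, mul_comm]

lemma ker_boundary_ne_bot (K : Type*) [Field K] [Fintype V] [Fintype E] [DecidableEq V]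
    [Nonempty V] (hcard : Fintype.card V ≤ Fintype.card E) :
    LinearMap.ker (boundary src tgt K) ≠ ⊥ := by
  intro hker
  have hrange : LinearMap.range (boundary src tgt K) = ⊤ := by
    refine Submodule.eq_top_of_finrank_eq (le_antisymm (Submodule.finrank_le _) ?_)
    rwa [LinearMap.finrank_range_of_inj (LinearMap.ker_eq_bot.1 hker),
      Module.finrank_fintype_fun_eq_card, Module.finrank_fintype_fun_eq_card]
  obtain ⟨v⟩ := ‹Nonempty V›
  obtain ⟨c, hc⟩ := LinearMap.range_eq_top.1 hrange (Pi.single v 1)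
  have hone : (1 : V → K) ⬝ᵥ boundary src tgt K c = 0 := by
    have hconst : coboundary src tgt K 1 = 0 := sub_self _
    rw [dotProduct_boundary, hconst, zero_dotProduct]
  simp [hc] at hone

variable {R : Type*} [CommRing R]

lemma reachable_of_boundary_eq_zero [Finite V] [Fintype E] [DecidableEq V] {c : E → R}
    (hc : boundary src tgt R c = 0) {e : E} (he : c e ≠ 0) :
    (multiGraph src tgt {e}ᶜ).Reachable (src e) (tgt e) := by
  classical
  cases nonempty_fintype V
  -- Otherwise the gradient of the indicator of the component of `src e` in `G - e` is supported on
  -- `e`, so pairing it with `c` isolates `c e`.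
  by_contra hsep
  let φ : V → R := fun v => if (multiGraph src tgt {e}ᶜ).Reachable (src e) v then 1 else 0
  have hφ : ∀ e' ≠ e, coboundary src tgt R φ e' = 0 := fun e' he' => by
    have hreach := multiGraph_reachable_of_mem src tgt (S := {e}ᶜ) he'
    have hiff : (multiGraph src tgt {e}ᶜ).Reachable (src e) (tgt e') ↔
        (multiGraph src tgt {e}ᶜ).Reachable (src e) (src e') :=
      ⟨fun h => h.trans hreach.symm, fun h => h.trans hreach⟩
    simp [coboundary_apply, φ, hiff]
  have hpair := dotProduct_boundary src tgt R φ c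
  rw [hc, dotProduct_zero, dotProduct,
    Finset.sum_eq_single e (fun e' _ he' => by rw [hφ e' he', zero_mul]) (by simp)] at hpair
  exact he (by simpa [coboundary_apply, φ, hsep] using hpair)

lemma connected_compl_of_boundary_eq_zero [Finite V] [Fintype E] [DecidableEq V]
    (hconn : (multiGraph src tgt Set.univ).Connected) {c : E → R}
    (hc : boundary src tgt R c = 0) {e : E} (he : c e ≠ 0) :
    (multiGraph src tgt {e}ᶜ).Connected := by
  have hmk : ∀ e', (multiGraph src tgt {e}ᶜ).connectedComponentMk (src e') =
      (multiGraph src tgt {e}ᶜ).connectedComponentMk (tgt e') := fun e' => by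
    rw [SimpleGraph.ConnectedComponent.eq]
    obtain rfl | hne := eq_or_ne e' e
    · exact reachable_of_boundary_eq_zero src tgt hc he
    · exact multiGraph_reachable_of_mem src tgt hne
  have := hconn.nonempty
  exact ⟨fun u v => SimpleGraph.ConnectedComponent.eq.1
    (eq_of_multiGraph_reachable src tgt (fun e' _ => hmk e') (hconn.preconnected u v))⟩

lemma isTreeAfter_singleton_of_boundary_eq_zero [Fintype V] [Fintype E] [DecidableEq V]
    [DecidableEq E] (hconn : (multiGraph src tgt Set.univ).Connected)
    (hbetti : Fintype.card E = Fintype.card V) {c : E → R}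
    (hc : boundary src tgt R c = 0) {e : E} (he : c e ≠ 0) : isTreeAfter src tgt {e} := by
  have hset : {e' | e' ∉ ({e} : Finset E)} = {e}ᶜ := by ext; simp
  refine ⟨hset ▸ connected_compl_of_boundary_eq_zero src tgt hconn hc he, ?_⟩
  simp only [Finset.mem_singleton, Finset.filter_ne', Finset.card_erase_of_mem (Finset.mem_univ e),
    Finset.card_univ, hbetti]

variable {src tgt}

lemma isTreeAfter.exists_coboundary_eq {K : Type*} [Field K] [Fintype V] [Fintype E]
    [DecidableEq E] {A : Finset E} (hA : isTreeAfter src tgt A) (α : E → K) :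
    ∃ φ : V → K, ∀ e ∉ A, coboundary src tgt K φ e = α e := by
  obtain ⟨hconn, hcard⟩ := hA
  obtain ⟨r⟩ := hconn.nonempty
  let T : (V → K) →ₗ[K] ({e // e ∉ A} → K) × K :=
    (LinearMap.funLeft K K Subtype.val ∘ₗ coboundary src tgt K).prod (LinearMap.proj r)
  have hinj : Function.Injective T := by
    refine (injective_iff_map_eq_zero T).2 fun φ hφ => funext fun v => ?_
    have hedge : ∀ e ∈ {e | e ∉ A}, φ (src e) = φ (tgt e) := fun e he =>
      (sub_eq_zero.1 (congrFun (congrArg Prod.fst hφ) ⟨e, he⟩)).symm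
    exact (eq_of_multiGraph_reachable src tgt hedge (hconn.preconnected v r)).trans
      (congrArg Prod.snd hφ)
  have hdim : Module.finrank K (V → K) = Module.finrank K (({e // e ∉ A} → K) × K) := by
    have : 0 < Fintype.card V := Fintype.card_pos_iff.2 ⟨r⟩
    simp only [Module.finrank_prod, Module.finrank_fintype_fun_eq_card, Module.finrank_self,
      Fintype.card_subtype, hcard]
    omega
  obtain ⟨φ, hφ⟩ := (LinearMap.injective_iff_surjective_of_finrank_eq_finrank hdim).1 hinj
    (fun e => α e, 0)
  exact ⟨φ, fun e he => congrFun (congrArg Prod.fst hφ) ⟨e, he⟩⟩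

end Circulation

section Degree

variable {V E : Type*} [DecidableEq V] {src tgt : E → V}

variable (src tgt) in
/-- The number of ends of the edge `e` at the vertex `v`: `2` for a loop at `v`. -/
def endCount (e : E) (v : V) : ℕ :=
  (if src e = v then 1 else 0) + (if tgt e = v then 1 else 0)

lemma endCount_pos {e : E} {v : V} (hv : src e = v ∨ tgt e = v) : 0 < endCount src tgt e v := by
  rcases hv with h | h <;> simp [endCount, h]

variable [Fintype E]

lemma mdeg_eq_sum_endCount (v : V) : mdeg src tgt v = ∑ e, endCount src tgt e v := rfl

variable {R : Type*} [CommRing R] {c : E → R}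

lemma two_le_sum_endCount_of_boundary_eq_zero (hc : boundary src tgt R c = 0) {s : Finset E}
    (hs : ∀ e ∉ s, c e = 0) {e : E} (he : c e ≠ 0) {v : V} (hv : src e = v ∨ tgt e = v) :
    2 ≤ ∑ e' ∈ s, endCount src tgt e' v := by
  classical
  by_contra! hlt
  have hes : e ∈ s := by_contra fun h => he (hs e h)
  have hpos := endCount_pos hv
  rw [← Finset.add_sum_erase _ _ hes] at hlt
  have hrest : ∑ e' ∈ s.erase e, endCount src tgt e' v = 0 := by omega
  have hother : ∀ e' ≠ e,
      c e' * ((if tgt e' = v then 1 else 0) - (if src e' = v then 1 else 0)) = 0 := fun e' he' => by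
    by_cases hes' : e' ∈ s
    · have hzero := Finset.sum_eq_zero_iff.1 hrest e' (Finset.mem_erase.2 ⟨he', hes'⟩)
      have hends : src e' ≠ v ∧ tgt e' ≠ v := by simpa [endCount] using hzero
      simp [hends]
    · rw [hs e' hes', zero_mul]
  have hflow := congrFun hc v
  rw [boundary_apply, Finset.sum_eq_single e (fun e' _ he' => hother e' he') (by simp)] at hflow
  have hone : ¬ (src e = v ∧ tgt e = v) := by
    rintro ⟨hsrc, htgt⟩
    have hloop : endCount src tgt e v = 2 := by simp [endCount, hsrc, htgt]
    omega
  by_cases hsrc : src e = v <;> by_cases htgt : tgt e = v <;> simp_all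

lemma two_le_mdeg_of_boundary_eq_zero (hc : boundary src tgt R c = 0) {e : E} (he : c e ≠ 0)
    {v : V} (hv : src e = v ∨ tgt e = v) : 2 ≤ mdeg src tgt v :=
  two_le_sum_endCount_of_boundary_eq_zero hc (s := Finset.univ) (by simp) he hv

lemma three_le_mdeg_of_boundary_eq_zero (hc : boundary src tgt R c = 0) {e e' : E}
    (he : c e ≠ 0) (he' : c e' = 0) {v : V} (hv : src e = v ∨ tgt e = v)
    (hv' : src e' = v ∨ tgt e' = v) : 3 ≤ mdeg src tgt v := by
  classical
  have hsupp : ∀ e'' ∉ Finset.univ.erase e', c e'' = 0 := fun e'' h => by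
    obtain rfl : e'' = e' := by simpa using h
    exact he'
  rw [mdeg_eq_sum_endCount, ← Finset.add_sum_erase _ _ (Finset.mem_univ e')]
  exact add_le_add (endCount_pos hv') (two_le_sum_endCount_of_boundary_eq_zero hc hsupp he hv)

lemma exists_three_le_mdeg (hconn : (multiGraph src tgt Set.univ).Connected)
    (hc : boundary src tgt R c = 0) (hc0 : c ≠ 0) (hleaf : ∃ v, mdeg src tgt v = 1) :
    ∃ v e, c e ≠ 0 ∧ (src e = v ∨ tgt e = v) ∧ 3 ≤ mdeg src tgt v := by
  obtain ⟨e₀, he₀⟩ := Function.ne_iff.1 hc0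
  obtain ⟨l, hl⟩ := hleaf
  let onSupport (v : V) : Prop := ∃ e, c e ≠ 0 ∧ (src e = v ∨ tgt e = v)
  have hl' : ¬ onSupport l := fun ⟨e, he, hel⟩ => by
    have := two_le_mdeg_of_boundary_eq_zero hc he hel
    omega
  obtain ⟨e', hmixed⟩ : ∃ e', onSupport (src e') ≠ onSupport (tgt e') := by
    by_contra! hconst
    have := eq_of_multiGraph_reachable src tgt (fun e _ => hconst e)
      (hconn.preconnected (src e₀) l)
    exact hl' (this ▸ ⟨e₀, he₀, Or.inl rfl⟩)
  have he' : c e' = 0 := by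
    by_contra h
    exact hmixed (propext ⟨fun _ => ⟨e', h, Or.inr rfl⟩, fun _ => ⟨e', h, Or.inl rfl⟩⟩)
  obtain ⟨v, hv', e, he, hv⟩ : ∃ v, (src e' = v ∨ tgt e' = v) ∧ onSupport v := by
    by_contra! h
    exact hmixed (propext (iff_of_false (h _ (Or.inl rfl)) (h _ (Or.inr rfl))))
  exact ⟨v, e, he, hv, three_le_mdeg_of_boundary_eq_zero hc he he' hv hv'⟩

end Degree

section GapCriterion

open scoped ComplexOrder MatrixOrder

variable {V E : Type*} [Fintype V] [Fintype E] [DecidableEq V] {src tgt : E → V}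
  {m : V → ℝ} {mE : E → ℝ}

lemma isTreeAfter.exists_realSpec_dml_eq [DecidableEq E] {A : Finset E}
    (hA : isTreeAfter src tgt A) (α : E → ℝ) :
    ∃ z : E → ℂ, (∀ e, ‖z e‖ = 1) ∧ (∀ e ∉ A, z e = 1) ∧
      realSpec (dml src tgt m mE α) = realSpec (dmlPhase src tgt m mE z) := by
  obtain ⟨φ, hφ⟩ := hA.exists_coboundary_eq α
  let β : E → ℝ := α - coboundary src tgt ℝ φ
  refine ⟨fun e => Complex.exp (β e * Complex.I), fun e => Complex.norm_exp_ofReal_mul_I _,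
    fun e he => by simp [β, hφ e he], ?_⟩
  rw [← realSpec_dmlPhase_gauge src tgt m mE (f := fun v => Complex.exp (φ v * Complex.I))
    (fun v => Complex.norm_exp_ofReal_mul_I _), dml]
  congr 2
  funext e
  rw [Complex.star_def, ← Complex.exp_conj, ← Complex.exp_add, ← Complex.exp_add]
  congr 1
  simp only [β, Pi.sub_apply, coboundary_apply, map_mul, Complex.conj_ofReal, Complex.conj_I,
    Complex.ofReal_sub]
  ring

lemma volume_iUnion_realSpec_dml_le [DecidableEq E] {A : Finset E} (hm : ∀ v, 0 ≤ m v)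
    (hmE : ∀ e ∈ A, 0 ≤ mE e) (hA : isTreeAfter src tgt A) :
    MeasureTheory.volume (⋃ α : E → ℝ, realSpec (dml src tgt m mE α)) ≤
      ENNReal.ofReal (2 * ∑ e ∈ A, mE e * (1 / m (src e) + 1 / m (tgt e))) := by
  let P := dmlPhase src tgt m mE (A.piecewise (fun _ => 0) (fun _ => 1))
  let D := ∑ e ∈ A, edgePotential src tgt m mE e
  have hlower : (P - D).IsHermitian := (dmlPhase_isHermitian src tgt m mE _).sub <|
    isSelfAdjoint_sum _ fun e _ => edgePotential_isHermitian src tgt m mE e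
  have hcover : ⋃ α : E → ℝ, realSpec (dml src tgt m mE α) ⊆
      ⋃ M ∈ Set.Icc (P - D) (P + D), realSpec M := by
    refine Set.iUnion_subset fun α => ?_
    obtain ⟨z, hz, hzA, hspec⟩ := hA.exists_realSpec_dml_eq (m := m) (mE := mE) α
    have hP : A.piecewise (fun _ => 0) z = A.piecewise (fun _ => 0) (fun _ => 1) :=
      A.piecewise_congr (fun _ _ => rfl) hzA
    have hmem := dmlPhase_mem_Icc src tgt m mE hmE fun e _ => hz e
    rw [hP] at hmem
    rw [hspec]
    exact Set.subset_biUnion_of_mem (u := realSpec) hmem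
  have htrace : (P + D - (P - D)).trace.re =
      2 * ∑ e ∈ A, mE e * (1 / m (src e) + 1 / m (tgt e)) := by
    rw [add_sub_sub_cancel, trace_add, trace_sum,
      Finset.sum_congr rfl fun e _ => trace_edgePotential src tgt m mE hm e,
      ← Complex.ofReal_sum, ← Complex.ofReal_add, Complex.ofReal_re, two_mul]
  exact htrace ▸ (MeasureTheory.measure_mono hcover).trans (volume_iUnion_realSpec_Icc_le hlower)

lemma msSet_nonempty_of_isTreeAfter [DecidableEq E] [Nonempty V] {A : Finset E}
    (hm : ∀ v, 0 ≤ m v) (hmE : ∀ e ∈ A, 0 ≤ mE e) (hA : isTreeAfter src tgt A) {v : V}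
    (hv : ∑ e ∈ A, mE e * (1 / m (src e) + 1 / m (tgt e)) < rho src tgt m mE v) :
    (msSet src tgt m mE).Nonempty := by
  refine Set.sdiff_nonempty.2 fun hcover => ?_
  have hnonneg : 0 ≤ ∑ e ∈ A, mE e * (1 / m (src e) + 1 / m (tgt e)) :=
    Finset.sum_nonneg fun e he => mul_nonneg (hmE e he)
      (add_nonneg (one_div_nonneg.2 (hm _)) (one_div_nonneg.2 (hm _)))
  have hvol := (MeasureTheory.measure_mono hcover).trans
    (volume_iUnion_realSpec_dml_le hm hmE hA)
  rw [Real.volume_Icc, sub_zero, ENNReal.ofReal_le_ofReal_iff (by positivity)] at hvol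
  have hsup := Finset.le_sup' (rho src tgt m mE) (Finset.mem_univ v)
  linarith

end GapCriterion

section StandardWeights

variable {V E : Type*} [DecidableEq V] (src tgt : E → V)

lemma edgeSumAt_one [Fintype E] (v : V) : edgeSumAt src tgt (fun _ => 1) v = mdeg src tgt v := by
  simp [edgeSumAt, mdeg]

lemma rho_mdeg [Fintype E] {v : V} (hv : mdeg src tgt v ≠ 0) :
    rho src tgt (fun v => (mdeg src tgt v : ℝ)) (fun _ => 1) v = 1 := by
  rw [rho, edgeSumAt_one, div_self (Nat.cast_ne_zero.2 hv)]

variable {src tgt}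

lemma apply_src_add_apply_tgt {M : Type*} [AddCommMagma M] (f : V → M) {e : E} {v : V}
    (hv : src e = v ∨ tgt e = v) :
    f (src e) + f (tgt e) = f (if src e = v then tgt e else src e) + f v := by
  split_ifs with hsrc
  · rw [hsrc, add_comm]
  · rw [hv.resolve_left hsrc]

end StandardWeights

/-- A finite connected weighted graph with standard weights
(`m(v) = deg v`, `m_e = 1`), Betti number 1 (`|E| = |V|`) and a vertex of degree 1
has a centre vertex `v₀` with a single cycle edge `e₁` such that
`1 − 1/deg((v₀)_{e₁}) − 1/deg(v₀) ≥ 1/6 > 0`; consequently the magnetic spectral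
gaps set is nonempty. -/
theorem stmt9 {V E : Type*} [Fintype V] [Fintype E] [DecidableEq V] [DecidableEq E]
    [Nonempty V] (src tgt : E → V)
    (hconn : (multiGraph src tgt Set.univ).Connected)
    (hbetti : Fintype.card E = Fintype.card V)
    (hdeg1 : ∃ v, mdeg src tgt v = 1) :
    ∃ (v₀ : V) (e₁ : E), (src e₁ = v₀ ∨ tgt e₁ = v₀) ∧
      isTreeAfter src tgt {e₁} ∧
      (1 / 6 : ℝ) ≤
        1 - 1 / (mdeg src tgt (if src e₁ = v₀ then tgt e₁ else src e₁) : ℝ)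
          - 1 / (mdeg src tgt v₀ : ℝ) ∧
      msSet src tgt (fun v => (mdeg src tgt v : ℝ)) (fun _ => 1) ≠ ∅ := by
  obtain ⟨c, hc, hc0⟩ :=
    Submodule.exists_mem_ne_zero_of_ne_bot (ker_boundary_ne_bot src tgt ℚ hbetti.ge)
  obtain ⟨v₀, e₁, he₁, hinc, hv₀⟩ := exists_three_le_mdeg hconn hc hc0 hdeg1
  have htree := isTreeAfter_singleton_of_boundary_eq_zero src tgt hconn hbetti hc he₁
  have hrho := rho_mdeg src tgt (show mdeg src tgt v₀ ≠ 0 by omega)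
  have hw₂ : 2 ≤ mdeg src tgt (if src e₁ = v₀ then tgt e₁ else src e₁) :=
    two_le_mdeg_of_boundary_eq_zero hc he₁ (by split_ifs <;> simp)
  have hends := apply_src_add_apply_tgt (fun v => 1 / (mdeg src tgt v : ℝ)) hinc
  refine ⟨v₀, e₁, hinc, htree, ?_⟩
  generalize (if src e₁ = v₀ then tgt e₁ else src e₁) = w at hw₂ hends ⊢
  have hdeg : (1 / mdeg src tgt w + 1 / mdeg src tgt v₀ : ℝ) ≤ 1 / 2 + 1 / 3 := by
    gcongr <;> assumption_mod_cast
  have hgap := msSet_nonempty_of_isTreeAfter (fun v => Nat.cast_nonneg (mdeg src tgt v))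
    (fun _ _ => zero_le_one) htree (v := v₀)
    (by rw [hrho, Finset.sum_singleton, one_mul, hends]; linarith)
  exact ⟨by linarith, hgap.ne_empty⟩
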